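/- The images of the six elements z(1,{1,2})²·z(1,{3,4}), z(1,{1,3})²·z(1,{2,4}), z(1,{1,4})²·z(1,{2,3}), z(1,{2,3})²·z(1,{1,4}), z(1,{2,4})²·z(1,{1,3}), z(1,{3,4})²·z(1,{1,2}) in the quotient vector space K(4)/F₃K(4) are linearly independent over ℚ, and every element of the bidegree-(0,6) component of the invariant subalgebra K(4)^{D₆} is congruent modulo F₃K(4) to a ℚ-linear combination of these six elements. -/

import Mathlib

/-!
Write `V = ℚ³/ℚ(1,1,1)`, so that `E(4)` is the exterior algebra of four copies (the blocks) of `V`, and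
put `θ_j = α_j β_j`, a basis of `Λ²V` in the `j`-th block, on which `S₃` acts by the sign character.

*Spanning.* A monomial of degree six in `E(4)` lies in `F₃K(4)` if it avoids a block
(`inc_lprod_mem_Fsub`). Otherwise each block has degree one or two in it (or it vanishes), so it is a
multiple of `θ_i θ_j u_k v_l` with `{i,j,k,l} = {1,2,3,4}` and `u, v ∈ V`. Averaging over `S₃` fixes
`θ_i θ_j` and sends `u_k v_l` to a multiple of `z(1,{k,l})` (`reyn_tt`), while
`z(1,{i,j})² = -6 θ_i θ_j` (`zE_sq`). Hence the average of any monomial is a combination of the six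
elements modulo `F₃K(4)` (`reyn_mem`), and an invariant element equals its average.

*Independence.* Setting `x = y = w = 0` and contracting with six linear forms, two supported on each
of the blocks `i`, `j` and one on each of `k`, `l`, gives a functional `phi i j k l`. Since
contractions anticommute and kill monomials avoiding the block on which they are supported, it
vanishes on `F₃K(4)` (`phi_Fsub`). The six functionals are dual, up to the factor `-12`, to the six
elements (`phi_gens`).
-/


set_option synthInstance.maxHeartbeats 1000000
set_option maxHeartbeats 1000000

open MvPolynomial
open scoped TensorProduct

noncomputable section

abbrev P3 : Type := MvPolynomial (Fin 3) ℚ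

def Jid : Ideal P3 :=
  Ideal.span {X 0 + X 1 + X 2, X 0 ^ 2 + X 1 ^ 2 + X 2 ^ 2, X 0 ^ 6 + X 1 ^ 6 + X 2 ^ 6}

abbrev Aq : Type := P3 ⧸ Jid

def mkA : P3 →ₐ[ℚ] Aq := Ideal.Quotient.mkₐ ℚ Jid

lemma rename_sum_pow (σ : Equiv.Perm (Fin 3)) (k : ℕ) :
    rename σ ((X 0 : P3) ^ k + X 1 ^ k + X 2 ^ k) = (X 0 : P3) ^ k + X 1 ^ k + X 2 ^ k := by
  have h : ((X 0 : P3) ^ k + X 1 ^ k + X 2 ^ k) = ∑ i, (X i : P3) ^ k := by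
    simp [Fin.sum_univ_three]
  rw [h, map_sum]
  simp only [map_pow, rename_X]
  exact Fintype.sum_equiv σ _ _ fun i => rfl

lemma rename_mem_J (σ : Equiv.Perm (Fin 3)) {p : P3} (hp : p ∈ Jid) :
    rename σ p ∈ Jid := by
  have hle : Jid.map (rename σ : P3 →ₐ[ℚ] P3).toRingHom ≤ Jid := by
    rw [Jid, Ideal.map_span, Ideal.span_le]
    rintro q ⟨r, hr, rfl⟩
    simp only [Set.mem_insert_iff, Set.mem_singleton_iff] at hr
    have h1 := rename_sum_pow σ 1
    simp only [pow_one] at h1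
    rcases hr with rfl | rfl | rfl
    · exact Ideal.subset_span (by simp only [AlgHom.toRingHom_eq_coe, RingHom.coe_coe, h1]; left; rfl)
    · exact Ideal.subset_span (by
        simp only [AlgHom.toRingHom_eq_coe, RingHom.coe_coe, rename_sum_pow σ 2]
        right; left; rfl)
    · exact Ideal.subset_span (by
        simp only [AlgHom.toRingHom_eq_coe, RingHom.coe_coe, rename_sum_pow σ 6]
        right; right; rfl)
  exact hle (Ideal.mem_map_of_mem _ hp)

def permAq (σ : Equiv.Perm (Fin 3)) : Aq →ₐ[ℚ] Aq :=
  Ideal.Quotient.liftₐ Jid (mkA.comp (rename σ)) (fun p hp => by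
    simp only [AlgHom.comp_apply, mkA, Ideal.Quotient.mkₐ_eq_mk]
    exact Ideal.Quotient.eq_zero_iff_mem.mpr (rename_mem_J σ hp))

def negP : P3 →ₐ[ℚ] P3 := aeval (fun i => -X i)

lemma negP_mem_J {p : P3} (hp : p ∈ Jid) : negP p ∈ Jid := by
  have hle : Jid.map negP.toRingHom ≤ Jid := by
    rw [Jid, Ideal.map_span, Ideal.span_le]
    rintro q ⟨r, hr, rfl⟩
    simp only [Set.mem_insert_iff, Set.mem_singleton_iff] at hr
    rcases hr with rfl | rfl | rfl
    · have : negP ((X 0 : P3) + X 1 + X 2) = -(X 0 + X 1 + X 2) := by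
        simp [negP]; try ring
      simp only [AlgHom.toRingHom_eq_coe, RingHom.coe_coe, this]
      exact neg_mem (Ideal.subset_span (by left; rfl))
    · have : negP ((X 0 : P3) ^ 2 + X 1 ^ 2 + X 2 ^ 2) = X 0 ^ 2 + X 1 ^ 2 + X 2 ^ 2 := by
        simp [negP]; try ring
      simp only [AlgHom.toRingHom_eq_coe, RingHom.coe_coe, this]
      exact Ideal.subset_span (by right; left; rfl)
    · have : negP ((X 0 : P3) ^ 6 + X 1 ^ 6 + X 2 ^ 6) = X 0 ^ 6 + X 1 ^ 6 + X 2 ^ 6 := by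
        simp [negP]; try ring
      simp only [AlgHom.toRingHom_eq_coe, RingHom.coe_coe, this]
      exact Ideal.subset_span (by right; right; rfl)
  exact hle (Ideal.mem_map_of_mem _ hp)

def negAq : Aq →ₐ[ℚ] Aq :=
  Ideal.Quotient.liftₐ Jid (mkA.comp negP) (fun p hp => by
    simp only [AlgHom.comp_apply, mkA, Ideal.Quotient.mkₐ_eq_mk]
    exact Ideal.Quotient.eq_zero_iff_mem.mpr (negP_mem_J hp))

def Vsub : Submodule ℚ (Fin 3 → ℚ) := Submodule.span ℚ {fun _ => (1 : ℚ)}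

abbrev Vq : Type := (Fin 3 → ℚ) ⧸ Vsub

def vGen (i : Fin 3) : Vq := Submodule.Quotient.mk (Pi.single i 1)

abbrev Em (m : ℕ) : Type := ExteriorAlgebra ℚ (Fin m → Vq)

def eGen (m : ℕ) (j : Fin m) (i : Fin 3) : Em m :=
  ExteriorAlgebra.ι ℚ (Pi.single j (vGen i))

def prodGen (m : ℕ) (i : Fin 3) (I : Finset (Fin m)) : Em m :=
  ((I.sort (· ≤ ·)).map (fun j => eGen m j i)).prod

def extHom {m : ℕ} (g : (Fin m → Vq) →ₗ[ℚ] (Fin m → Vq)) : Em m →ₐ[ℚ] Em m :=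
  ExteriorAlgebra.lift ℚ ⟨(ExteriorAlgebra.ι ℚ).comp g, fun v => by
    simpa using ExteriorAlgebra.ι_sq_zero (g v)⟩

def permV (σ : Equiv.Perm (Fin 3)) : Vq →ₗ[ℚ] Vq :=
  Submodule.mapQ Vsub Vsub (LinearMap.funLeft ℚ ℚ ⇑σ⁻¹) (by
    rw [Vsub, Submodule.span_le]
    rintro v rfl
    exact Submodule.mem_comap.mpr (Submodule.subset_span rfl))

abbrev Kk (m : ℕ) : Type := Aq ⊗[ℚ] Em m

def zz (m : ℕ) (d : ℕ) (I : Finset (Fin m)) : Kk m :=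
  mkA (X 0 ^ d) ⊗ₜ[ℚ] prodGen m 0 I + mkA (X 1 ^ d) ⊗ₜ[ℚ] prodGen m 1 I +
    mkA (X 2 ^ d) ⊗ₜ[ℚ] prodGen m 2 I

def zS (m : ℕ) (i : ℕ) (I : Finset (Fin m)) : Kk m := zz m (i - 1) I

/-- The algebra endomorphism of `K(m)` given by the element of `S₃ ⊆ D₆` corresponding to
the permutation `σ`: it simultaneously permutes `(x,y,w)` and each triple `(α_j,β_j,γ_j)`. -/
def permK (m : ℕ) (σ : Equiv.Perm (Fin 3)) : Kk m →ₐ[ℚ] Kk m :=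
  Algebra.TensorProduct.map (permAq σ) (extHom (LinearMap.compLeft (permV σ) (Fin m)))

/-- The algebra endomorphism of `K(m)` given by the central element `a³` of `D₆`: it
multiplies each of `x, y, w, α_j, β_j, γ_j` by `−1`. -/
def negK (m : ℕ) : Kk m →ₐ[ℚ] Kk m :=
  Algebra.TensorProduct.map negAq (extHom (-LinearMap.id))

/-- The set of `D₆`-invariants of `K(m)`: since `D₆` is generated by the subgroup
`⟨a²,b⟩ ≅ S₃` together with the central element `a³`, these are the elements fixed by all
the simultaneous permutations and by the sign automorphism. -/
def invD6 (m : ℕ) : Set (Kk m) :=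
  {z | (∀ σ : Equiv.Perm (Fin 3), permK m σ z = z) ∧ negK m z = z}

/-- The set of `S₃`-invariants of `K(m)`, for the subgroup `⟨a²,b⟩ ≅ S₃` of `D₆`. -/
def invS3 (m : ℕ) : Set (Kk m) :=
  {z | ∀ σ : Equiv.Perm (Fin 3), permK m σ z = z}

/-- The bidegree-`(p,q)` component of the bigraded algebra `K(m)` (with `x, y, w` of
bidegree `(2,0)` and each `α_j, β_j, γ_j` of bidegree `(0,1)`): the ℚ-span of the images
of the bihomogeneous monomials of bidegree `(p,q)`. -/
def component (m p q : ℕ) : Submodule ℚ (Kk m) :=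
  Submodule.span ℚ {z : Kk m | ∃ (a b c : ℕ) (l : List (Fin m × Fin 3)),
    2 * (a + b + c) = p ∧ l.length = q ∧
    z = mkA (X 0 ^ a * X 1 ^ b * X 2 ^ c) ⊗ₜ[ℚ] (l.map fun pr => eGen m pr.1 pr.2).prod}

/-- The `D₆`-invariants of `K(m)`, as a ℚ-submodule. -/
def invD6Submodule (m : ℕ) : Submodule ℚ (Kk m) where
  carrier := invD6 m
  add_mem' := by
    rintro a b ⟨ha1, ha2⟩ ⟨hb1, hb2⟩
    exact ⟨fun σ => by rw [map_add, ha1 σ, hb1 σ], by rw [map_add, ha2, hb2]⟩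
  zero_mem' := ⟨fun σ => map_zero _, map_zero _⟩
  smul_mem' := by
    rintro c a ⟨h1, h2⟩
    exact ⟨fun σ => by rw [map_smul, h1 σ], by rw [map_smul, h2]⟩

/-- The filtration submodule `F_n K(m)`: the ℚ-linear span of the elements
`x^a y^b w^c α_I β_J γ_K` with `|I ∪ J ∪ K| ≤ n`. -/
def Fsub (m n : ℕ) : Submodule ℚ (Kk m) :=
  Submodule.span ℚ {z : Kk m | ∃ (a b c : ℕ) (I J K : Finset (Fin m)),
    (I ∪ J ∪ K).card ≤ n ∧
    z = mkA (X 0 ^ a * X 1 ^ b * X 2 ^ c) ⊗ₜ[ℚ]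
          (prodGen m 0 I * prodGen m 1 J * prodGen m 2 K)}
/-- The six elements `z(1,{1,2})²·z(1,{3,4})`, `z(1,{1,3})²·z(1,{2,4})`,
`z(1,{1,4})²·z(1,{2,3})`, `z(1,{2,3})²·z(1,{1,4})`, `z(1,{2,4})²·z(1,{1,3})`,
`z(1,{3,4})²·z(1,{1,2})` of `K(4)` (indices shifted: the paper's `{1,2,3,4}` is
`{0,1,2,3}` here). -/
def gens19 : Fin 6 → Kk 4 :=
  ![zS 4 1 {0, 1} ^ 2 * zS 4 1 {2, 3},
    zS 4 1 {0, 2} ^ 2 * zS 4 1 {1, 3},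
    zS 4 1 {0, 3} ^ 2 * zS 4 1 {1, 2},
    zS 4 1 {1, 2} ^ 2 * zS 4 1 {0, 3},
    zS 4 1 {1, 3} ^ 2 * zS 4 1 {0, 2},
    zS 4 1 {2, 3} ^ 2 * zS 4 1 {0, 1}]

/-! ### Monomials in the exterior factor -/

lemma eGen_sq (m : ℕ) (j : Fin m) (p : Fin 3) : eGen m j p * eGen m j p = 0 :=
  ExteriorAlgebra.ι_sq_zero _

lemma eGen_anti (m : ℕ) (j k : Fin m) (p q : Fin 3) :
    eGen m j p * eGen m k q = -(eGen m k q * eGen m j p) :=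
  eq_neg_of_add_eq_zero_left (ExteriorAlgebra.ι_add_mul_swap _ _)

lemma eGen_two (m : ℕ) (j : Fin m) : eGen m j 2 = -eGen m j 0 - eGen m j 1 := by
  have h : vGen 0 + vGen 1 + vGen 2 = 0 := by
    rw [vGen, vGen, vGen, ← Submodule.Quotient.mk_add, ← Submodule.Quotient.mk_add,
      Submodule.Quotient.mk_eq_zero]
    refine Submodule.subset_span ?_
    rw [Set.mem_singleton_iff]
    ext i
    fin_cases i <;> simp
  have h2 : vGen 2 = -vGen 0 - vGen 1 := by
    rw [← sub_eq_zero, ← h]; abel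
  rw [eGen, eGen, eGen, h2, ← map_neg, ← map_sub, ← Pi.single_neg, ← Pi.single_sub]

/-- The product in `E(m)` of the generators indexed by a list of pairs (block, colour). -/
def lprod (m : ℕ) (l : List (Fin m × Fin 3)) : Em m :=
  (l.map fun pr => eGen m pr.1 pr.2).prod

/-- Reordering a monomial changes it only by a scalar (a sign). -/
lemma lprod_perm {m : ℕ} {l l' : List (Fin m × Fin 3)} (h : l.Perm l') :
    ∃ s : ℚ, lprod m l = s • lprod m l' := by
  induction h with
  | nil => exact ⟨1, by simp⟩
  | cons x _ ih =>
    obtain ⟨s, hs⟩ := ih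
    exact ⟨s, by simp only [lprod, List.map_cons, List.prod_cons] at hs ⊢; rw [hs, mul_smul_comm]⟩
  | swap x y l =>
    refine ⟨-1, ?_⟩
    simp only [lprod, List.map_cons, List.prod_cons]
    rw [← mul_assoc, ← mul_assoc, eGen_anti]
    simp
  | trans _ _ ih1 ih2 =>
    obtain ⟨s, hs⟩ := ih1
    obtain ⟨t, ht⟩ := ih2
    exact ⟨s * t, by rw [hs, ht, smul_smul]⟩

lemma lprod_of_not_nodup {m : ℕ} {l : List (Fin m × Fin 3)} (h : ¬ l.Nodup) :
    lprod m l = 0 := by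
  obtain ⟨x, hx⟩ := List.exists_duplicate_iff_not_nodup.mpr h
  obtain ⟨l', hl'⟩ := (List.duplicate_iff_sublist.mp hx).exists_perm_append
  obtain ⟨s, hs⟩ := lprod_perm hl'
  rw [hs]
  simp [lprod, ← mul_assoc, eGen_sq]

lemma prodGen_eq_lprod (m : ℕ) (i : Fin 3) (I : Finset (Fin m)) :
    prodGen m i I = lprod m ((I.sort (· ≤ ·)).map fun j => (j, i)) := by
  simp [prodGen, lprod, Function.comp_def]

lemma lprod_append (m : ℕ) (l l' : List (Fin m × Fin 3)) :
    lprod m (l ++ l') = lprod m l * lprod m l' := by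
  simp [lprod]

/-- The map `u ↦ 1 ⊗ u` from `E(4)` to `K(4)`. -/
def inc : Em 4 →ₐ[ℚ] Kk 4 := Algebra.TensorProduct.includeRight

lemma inc_apply (u : Em 4) : inc u = (1 : Aq) ⊗ₜ[ℚ] u := rfl

lemma inc_mul (u v : Em 4) : inc (u * v) = inc u * inc v := by
  rw [inc_apply, inc_apply, inc_apply, Algebra.TensorProduct.tmul_mul_tmul, one_mul]

/-- Monomials avoiding some block lie in `F₃K(4)`. If no generator is repeated, such a monomial can be
sorted into the shape `α_I β_J γ_K`; otherwise it vanishes. -/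
lemma inc_lprod_mem_Fsub {l : List (Fin 4 × Fin 3)} {t : Fin 4}
    (ht : ∀ pr ∈ l, pr.1 ≠ t) : inc (lprod 4 l) ∈ Fsub 4 3 := by
  by_cases h : l.Nodup
  · let S : Fin 3 → Finset (Fin 4) := fun i => Finset.univ.filter fun j => (j, i) ∈ l
    have hp : l.Perm ((((S 0).sort (· ≤ ·)).map fun j => (j, (0 : Fin 3))) ++
        (((S 1).sort (· ≤ ·)).map fun j => (j, (1 : Fin 3))) ++
        (((S 2).sort (· ≤ ·)).map fun j => (j, (2 : Fin 3)))) := by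
      rw [List.perm_ext_iff_of_nodup h]
      · rintro ⟨j, i⟩
        fin_cases i <;> simp [S]
      · have hn : ∀ i : Fin 3, (((S i).sort (· ≤ ·)).map fun j => (j, i)).Nodup := fun i =>
          (Finset.sort_nodup _ _).map fun a b hab => (Prod.mk.inj hab).1
        refine List.Nodup.append (List.Nodup.append (hn 0) (hn 1) ?_) (hn 2) ?_ <;>
        · rintro ⟨j, i⟩ h1 h2
          simp at h1 h2
          omega
    obtain ⟨s, hs⟩ := lprod_perm hp
    rw [hs, lprod_append, lprod_append, ← prodGen_eq_lprod, ← prodGen_eq_lprod,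
      ← prodGen_eq_lprod, map_smul]
    refine Submodule.smul_mem _ _ (Submodule.subset_span ⟨0, 0, 0, S 0, S 1, S 2, ?_, ?_⟩)
    · have hsub : S 0 ∪ S 1 ∪ S 2 ⊆ Finset.univ.erase t := by
        intro j hj
        simp only [Finset.mem_erase, Finset.mem_univ, and_true]
        rintro rfl
        simp only [S, Finset.mem_union, Finset.mem_filter, Finset.mem_univ, true_and] at hj
        rcases hj with (hj | hj) | hj <;> exact ht _ hj rfl
      simpa using Finset.card_le_card hsub
    · simp [inc_apply]
  · rw [lprod_of_not_nodup h, map_zero]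
    exact zero_mem _

lemma inc_perm (σ : Equiv.Perm (Fin 3)) (l : List (Fin 4 × Fin 3)) :
    permK 4 σ (inc (lprod 4 l)) = inc (lprod 4 (l.map fun pr => (pr.1, σ pr.2))) := by
  have hv : ∀ p, permV σ (vGen p) = vGen (σ p) := by
    intro p
    rw [permV, vGen, vGen, Submodule.mapQ_apply]
    congr 1
    ext i
    simp only [LinearMap.funLeft_apply, Pi.single_apply]
    congr 1
    rw [Equiv.Perm.inv_eq_iff_eq, eq_comm]
  have he : ∀ (j : Fin 4) p, extHom (LinearMap.compLeft (permV σ) (Fin 4)) (eGen 4 j p)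
      = eGen 4 j (σ p) := by
    intro j p
    rw [extHom, eGen, ExteriorAlgebra.lift_ι_apply, eGen]
    simp only [LinearMap.comp_apply]
    congr 1
    ext i
    by_cases hij : i = j
    · subst hij; simp [hv]
    · simp [hij]
  rw [inc_apply, permK, Algebra.TensorProduct.map_tmul, map_one, inc_apply, lprod, map_list_prod]
  simp [lprod, Function.comp_def, he]

/-! ### Top forms of the blocks and the elements `z(1,{k,l})` -/

/-- The top form `θ_j = α_j β_j` of the `j`-th block `Λ(α_j, β_j, γ_j)/(α_j+β_j+γ_j)`. -/
def th (j : Fin 4) : Em 4 := eGen 4 j 0 * eGen 4 j 1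

/-- `Λ²` of each block is spanned by `θ_j`, with the same structure constants in every block; two
distinct generators multiply to `±θ_j`. -/
lemma eGen_pair (p q : Fin 3) :
    ∃ c : ℚ, (p ≠ q → c * c = 1) ∧ ∀ j, eGen 4 j p * eGen 4 j q = c • th j := by
  have h10 : ∀ j, eGen 4 j 1 * eGen 4 j 0 = - th j := fun j => eGen_anti _ _ _ _ _
  fin_cases p <;> fin_cases q
  · exact ⟨0, by simp, fun j => by simp [eGen_sq]⟩
  · exact ⟨1, by simp, fun j => by simp [th]⟩
  · exact ⟨-1, by simp, fun j => by simp [th, eGen_two, mul_sub, eGen_sq]⟩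
  · exact ⟨-1, by simp, fun j => by simp [h10]⟩
  · exact ⟨0, by simp, fun j => by simp [eGen_sq]⟩
  · exact ⟨1, by simp, fun j => by simp [h10, eGen_two, mul_sub, eGen_sq]⟩
  · exact ⟨1, by simp, fun j => by simp [h10, eGen_two, sub_mul, eGen_sq]⟩
  · exact ⟨-1, by simp, fun j => by simp [th, eGen_two, sub_mul, eGen_sq]⟩
  · exact ⟨0, by simp, fun j => by simp [eGen_sq]⟩

lemma th_mul_eGen (j : Fin 4) (p : Fin 3) : th j * eGen 4 j p = 0 := by
  have h0 : th j * eGen 4 j 0 = 0 := by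
    rw [th, mul_assoc, eGen_anti, ← neg_mul_eq_mul_neg]
    simp [← mul_assoc, eGen_sq]
  have h1 : th j * eGen 4 j 1 = 0 := by simp [th, mul_assoc, eGen_sq]
  fin_cases p
  · exact h0
  · exact h1
  · simp [eGen_two, mul_sub, h0, h1]

lemma eGen_mul_th (i j : Fin 4) (p : Fin 3) : eGen 4 i p * th j = th j * eGen 4 i p := by
  rw [th, ← mul_assoc, eGen_anti, neg_mul, mul_assoc, eGen_anti 4 i j p 1, mul_neg, neg_neg,
    mul_assoc]

lemma th_mul_th (i j : Fin 4) : th i * th j = th j * th i := by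
  conv_lhs => rw [th, mul_assoc, eGen_mul_th, ← mul_assoc, eGen_mul_th, mul_assoc, ← th]

/-- The element `α_kα_l + β_kβ_l + γ_kγ_l` of `E(4)`, which is `z(1,{k,l})` when `k < l`. -/
def zE (k l : Fin 4) : Em 4 :=
  eGen 4 k 0 * eGen 4 l 0 + eGen 4 k 1 * eGen 4 l 1 + eGen 4 k 2 * eGen 4 l 2

lemma zS_eq {k l : Fin 4} (h : k < l) : zS 4 1 {k, l} = inc (zE k l) := by
  have hs : ({k, l} : Finset (Fin 4)).sort (· ≤ ·) = [k, l] := by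
    rw [Finset.sort_insert, Finset.sort_singleton]
    · simpa using h.le
    · simpa using h.ne
  simp [zS, zz, prodGen, hs, zE, inc_apply, TensorProduct.tmul_add]

/-- The Grassmann-algebra computation behind `z(1,{k,l})² = -6 θ_k θ_l`. -/
lemma sq_aux {R : Type*} [Ring R] {a b c d : R} (ha : a * a = 0) (hb : b * b = 0)
    (hc : c * c = 0) (hd : d * d = 0) (hba : b * a = -(a * b)) (hca : c * a = -(a * c))
    (hda : d * a = -(a * d)) (hcb : c * b = -(b * c)) (hdb : d * b = -(b * d))
    (hdc : d * c = -(c * d)) :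
    (a * c + b * d + (-a - b) * (-c - d)) ^ 2 = -(6 * (a * b * (c * d))) := by
  have e : ∀ {u v : R}, u * v = 0 → ∀ x, u * (v * x) = 0 := fun h x => by
    rw [← mul_assoc, h, zero_mul]
  have f : ∀ {u v : R}, v * u = -(u * v) → ∀ x, v * (u * x) = -(u * (v * x)) := fun h x => by
    rw [← mul_assoc, h, neg_mul, mul_assoc]
  simp only [sq, mul_add, add_mul, mul_sub, sub_mul, neg_mul, mul_neg, neg_neg, mul_assoc,
    hc, hd, e ha, e hb, hdc, f hba, f hca, f hda, f hcb, f hdb, mul_zero, neg_zero]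
  noncomm_ring

lemma zE_sq (k l : Fin 4) : zE k l ^ 2 = (-6 : ℚ) • (th k * th l) := by
  rw [zE, eGen_two, eGen_two, sq_aux] <;> first | exact eGen_sq _ _ _ | skip
  · rw [neg_smul, Algebra.smul_def, map_ofNat, th, th]
  all_goals exact eGen_anti _ _ _ _ _

/-! ### Symmetrization and spanning -/

/-- The sum of `F₃K(4)` and the ℚ-span of the six generators. -/
def Wsub : Submodule ℚ (Kk 4) := Fsub 4 3 ⊔ Submodule.span ℚ (Set.range gens19)

lemma zS_sq_mul {i j k l : Fin 4} (hij : i < j) (hkl : k < l) :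
    zS 4 1 {i, j} ^ 2 * zS 4 1 {k, l} = (-6 : ℚ) • inc (th i * th j * zE k l) := by
  rw [zS_eq hij, zS_eq hkl, sq, ← inc_mul, ← inc_mul, ← sq, zE_sq, smul_mul_assoc, map_smul]

lemma tt_mem_of {i j k l : Fin 4} (hij : i < j) (hkl : k < l) (r : Fin 6)
    (h : gens19 r = zS 4 1 {i, j} ^ 2 * zS 4 1 {k, l}) :
    inc (th i * th j * zE k l) ∈ Wsub := by
  have h2 : inc (th i * th j * zE k l) = (-6 : ℚ)⁻¹ • gens19 r := by
    rw [h, zS_sq_mul hij hkl, smul_smul]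
    norm_num
  rw [h2]
  exact Submodule.smul_mem _ _ (Submodule.mem_sup_right (Submodule.subset_span ⟨r, rfl⟩))

/-- Six times the Reynolds operator of `S₃`. -/
def reyn : Kk 4 →ₗ[ℚ] Kk 4 :=
  (permK 4 1).toLinearMap + (permK 4 (Equiv.swap 0 1)).toLinearMap +
    (permK 4 (Equiv.swap 0 2)).toLinearMap + (permK 4 (Equiv.swap 1 2)).toLinearMap +
    (permK 4 (Equiv.swap 0 1 * Equiv.swap 1 2)).toLinearMap +
    (permK 4 (Equiv.swap 1 2 * Equiv.swap 0 1)).toLinearMap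

/-- `S₃` acts on each `θ_j` by the sign character, hence fixes `θ_i θ_j`. -/
lemma permK_tt (σ : Equiv.Perm (Fin 3)) (i j k l : Fin 4) (p q : Fin 3) :
    permK 4 σ (inc (th i * th j * (eGen 4 k p * eGen 4 l q))) =
      inc (th i * th j * (eGen 4 k (σ p) * eGen 4 l (σ q))) := by
  have h : th i * th j * (eGen 4 k p * eGen 4 l q) =
      lprod 4 [(i, 0), (i, 1), (j, 0), (j, 1), (k, p), (l, q)] := by
    simp [lprod, th, mul_assoc]
  obtain ⟨c, hc, hc2⟩ := eGen_pair (σ 0) (σ 1)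
  have hcc : c * c = 1 := hc (by simp)
  rw [h, inc_perm]
  congr 1
  calc _ = (eGen 4 i (σ 0) * eGen 4 i (σ 1)) * (eGen 4 j (σ 0) * eGen 4 j (σ 1)) *
        (eGen 4 k (σ p) * eGen 4 l (σ q)) := by simp [lprod, mul_assoc]
    _ = _ := by
      rw [hc2, hc2, smul_mul_smul_comm, hcc, one_smul]

/-- Symmetrizing `u_k v_l` gives a multiple of the unique invariant `z(1,{k,l})` of `V ⊗ V`: the six
translates of `α_kα_l` add up to `2z`, and those of `α_kβ_l` to
`(α_k+β_k+γ_k)(α_l+β_l+γ_l) - z = -z`. -/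
lemma reyn_tt (i j k l : Fin 4) (p q : Fin 3) :
    ∃ c : ℚ, reyn (inc (th i * th j * (eGen 4 k p * eGen 4 l q))) =
      c • inc (th i * th j * zE k l) := by
  simp only [reyn, LinearMap.add_apply, AlgHom.toLinearMap_apply, permK_tt]
  simp only [← map_add, ← mul_add, ← map_smul, ← mul_smul_comm]
  refine ⟨if p = q then 2 else -1, ?_⟩
  congr 2
  have e1 : (Equiv.swap (0 : Fin 3) 1) 2 = 2 := by decide
  have e2 : (Equiv.swap (0 : Fin 3) 2) 1 = 1 := by decide
  have e3 : (Equiv.swap (1 : Fin 3) 2) 0 = 0 := by decide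
  fin_cases p <;> fin_cases q <;>
    simp [e1, e2, e3, zE, eGen_two, mul_sub, sub_mul] <;> module

/-- The product of the generators of the `j`-th block indexed by a list of colours. -/
def bprod (j : Fin 4) (A : List (Fin 3)) : Em 4 := (A.map fun p => eGen 4 j p).prod

/-- A nonempty product in one block is `0`, a generator, or a multiple of `θ_j`, since `Λ³` of a
two-dimensional space vanishes. -/
lemma bprod_cases (j : Fin 4) (A : List (Fin 3)) :
    A = [] ∨ bprod j A = 0 ∨ (A.length = 1 ∧ ∃ p, bprod j A = eGen 4 j p) ∨
      (A.length = 2 ∧ ∃ c : ℚ, bprod j A = c • th j) := by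
  rcases A with _ | ⟨p, _ | ⟨q, _ | ⟨r, A⟩⟩⟩
  · simp
  · exact Or.inr (Or.inr (Or.inl ⟨rfl, p, by simp [bprod]⟩))
  · obtain ⟨c, -, hc⟩ := eGen_pair p q
    exact Or.inr (Or.inr (Or.inr ⟨rfl, c, by simp [bprod, hc]⟩))
  · obtain ⟨c, -, hc⟩ := eGen_pair p q
    refine Or.inr (Or.inl ?_)
    simp only [bprod, List.map_cons, List.prod_cons]
    rw [← mul_assoc, ← mul_assoc, hc, smul_mul_assoc, th_mul_eGen, smul_zero, zero_mul]

/-- Sorting a monomial by blocks. -/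
lemma exists_block_perm (l : List (Fin 4 × Fin 3)) : ∃ A B C D : List (Fin 3),
    l.Perm (A.map (Prod.mk 0) ++ (B.map (Prod.mk 1) ++ (C.map (Prod.mk 2) ++
      D.map (Prod.mk 3)))) := by
  induction l with
  | nil => exact ⟨[], [], [], [], by simp⟩
  | cons x l ih =>
    obtain ⟨A, B, C, D, h⟩ := ih
    obtain ⟨j, p⟩ := x
    fin_cases j
    · exact ⟨p :: A, B, C, D, h.cons _⟩
    · refine ⟨A, p :: B, C, D, (h.cons _).trans ?_⟩
      exact List.perm_middle.symm
    · refine ⟨A, B, p :: C, D, (h.cons _).trans ?_⟩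
      refine List.perm_middle.symm.trans (List.Perm.append_left _ ?_)
      exact List.perm_middle.symm
    · refine ⟨A, B, C, p :: D, (h.cons _).trans ?_⟩
      refine List.perm_middle.symm.trans (List.Perm.append_left _ ?_)
      refine List.perm_middle.symm.trans (List.Perm.append_left _ ?_)
      exact List.perm_middle.symm

lemma reyn_mem_of_missing {l : List (Fin 4 × Fin 3)} {t : Fin 4}
    (ht : ∀ pr ∈ l, pr.1 ≠ t) : reyn (inc (lprod 4 l)) ∈ Wsub := by
  have h : ∀ σ, permK 4 σ (inc (lprod 4 l)) ∈ Wsub := fun σ => by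
    rw [inc_perm]
    refine Submodule.mem_sup_left (inc_lprod_mem_Fsub (t := t) ?_)
    simp only [List.mem_map]
    rintro _ ⟨x, hx, rfl⟩
    exact ht x hx
  simp only [reyn, LinearMap.add_apply, AlgHom.toLinearMap_apply]
  exact add_mem (add_mem (add_mem (add_mem (add_mem (h _) (h _)) (h _)) (h _)) (h _)) (h _)

lemma reyn_tt_mem {i j k l : Fin 4} (h : inc (th i * th j * zE k l) ∈ Wsub) (p q : Fin 3)
    (c : ℚ) : reyn (inc (c • (th i * (th j * (eGen 4 k p * eGen 4 l q))))) ∈ Wsub := by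
  obtain ⟨d, hd⟩ := reyn_tt i j k l p q
  rw [map_smul, map_smul, ← mul_assoc, hd]
  exact Submodule.smul_mem _ _ (Submodule.smul_mem _ _ h)

/-- A monomial of degree six hitting all four blocks vanishes unless two blocks contribute `θ` and the
other two a single generator, so its symmetrization is a combination of the six generators modulo
`F₃K(4)`. -/
lemma reyn_mem {l : List (Fin 4 × Fin 3)} (hl : l.length = 6) :
    reyn (inc (lprod 4 l)) ∈ Wsub := by
  obtain ⟨A, B, C, D, h⟩ := exists_block_perm l
  have hmem : ∀ pr ∈ l, pr ∈ (A.map (Prod.mk (0 : Fin 4)) ++ (B.map (Prod.mk 1) ++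
      (C.map (Prod.mk 2) ++ D.map (Prod.mk 3)))) := fun pr hpr => h.mem_iff.mp hpr
  have hlen : A.length + (B.length + (C.length + D.length)) = 6 := by
    have := h.length_eq
    simp only [List.length_append, List.length_map] at this
    omega
  obtain ⟨s, hs⟩ := lprod_perm h
  have hb : ∀ (j : Fin 4) (A : List (Fin 3)), lprod 4 (A.map (Prod.mk j)) = bprod j A := by
    intro j A
    simp [lprod, bprod, Function.comp_def]
  rw [lprod_append, lprod_append, lprod_append, hb, hb, hb, hb] at hs
  have hz : bprod 0 A * (bprod 1 B * (bprod 2 C * bprod 3 D)) = 0 →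
      reyn (inc (lprod 4 l)) ∈ Wsub := fun h0 => by
    rw [hs, h0, smul_zero, map_zero, map_zero]
    exact zero_mem _
  have hcomm : ∀ (i j : Fin 4) (p : Fin 3) (x : Em 4),
      eGen 4 i p * (th j * x) = th j * (eGen 4 i p * x) := fun i j p x => by
    rw [← mul_assoc, eGen_mul_th, mul_assoc]
  rcases bprod_cases 0 A with hA | hA | hA
  · refine reyn_mem_of_missing (t := 0) fun pr hpr => ?_
    have := hmem pr hpr
    subst hA
    simp at this
    rcases this with ⟨_, _, rfl⟩ | ⟨_, _, rfl⟩ | ⟨_, _, rfl⟩ <;> simp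
  · exact hz (by simp [hA])
  rcases bprod_cases 1 B with hB | hB | hB
  · refine reyn_mem_of_missing (t := 1) fun pr hpr => ?_
    have := hmem pr hpr
    subst hB
    simp at this
    rcases this with ⟨_, _, rfl⟩ | ⟨_, _, rfl⟩ | ⟨_, _, rfl⟩ <;> simp
  · exact hz (by simp [hB])
  rcases bprod_cases 2 C with hC | hC | hC
  · refine reyn_mem_of_missing (t := 2) fun pr hpr => ?_
    have := hmem pr hpr
    subst hC
    simp at this
    rcases this with ⟨_, _, rfl⟩ | ⟨_, _, rfl⟩ | ⟨_, _, rfl⟩ <;> simp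
  · exact hz (by simp [hC])
  rcases bprod_cases 3 D with hD | hD | hD
  · refine reyn_mem_of_missing (t := 3) fun pr hpr => ?_
    have := hmem pr hpr
    subst hD
    simp at this
    rcases this with ⟨_, _, rfl⟩ | ⟨_, _, rfl⟩ | ⟨_, _, rfl⟩ <;> simp
  · exact hz (by simp [hD])
  rw [hs]
  rcases hA with ⟨hA, a, ha⟩ | ⟨hA, a, ha⟩ <;> rcases hB with ⟨hB, b, hb⟩ | ⟨hB, b, hb⟩ <;>
    rcases hC with ⟨hC, c, hc⟩ | ⟨hC, c, hc⟩ <;> rcases hD with ⟨hD, d, hd⟩ | ⟨hD, d, hd⟩ <;>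
    first
    -- the degrees of the four blocks add up to six
    | (exfalso; omega)
    | (rw [ha, hb, hc, hd]
       simp only [mul_smul_comm, smul_mul_assoc, smul_smul, hcomm, eGen_mul_th]
       refine reyn_tt_mem ?_ _ _ _
       first
       | exact tt_mem_of (by decide) (by decide) 0 rfl
       | exact tt_mem_of (by decide) (by decide) 1 rfl
       | exact tt_mem_of (by decide) (by decide) 2 rfl
       | exact tt_mem_of (by decide) (by decide) 3 rfl
       | exact tt_mem_of (by decide) (by decide) 4 rfl
       | exact tt_mem_of (by decide) (by decide) 5 rfl)

/-- An invariant element is a sixth of its own symmetrization. -/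
lemma spanning (z : Kk 4) (hz : z ∈ component 4 0 6 ⊓ invD6Submodule 4) : z ∈ Wsub := by
  obtain ⟨h1, h2, -⟩ := hz
  have h3 : reyn z ∈ Wsub := by
    have hle : component 4 0 6 ≤ Wsub.comap reyn := by
      rw [component, Submodule.span_le]
      rintro _ ⟨a, b, c, l, habc, hl, rfl⟩
      obtain ⟨rfl, rfl, rfl⟩ : a = 0 ∧ b = 0 ∧ c = 0 := by omega
      have := reyn_mem hl
      simpa [inc_apply, lprod] using this
    exact hle h1
  have h4 : reyn z = (6 : ℚ) • z := by
    simp only [reyn, LinearMap.add_apply, AlgHom.toLinearMap_apply, h2 _]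
    module
  have h5 : z = (6 : ℚ)⁻¹ • reyn z := by
    rw [h4, smul_smul]
    norm_num
  rw [h5]
  exact Submodule.smul_mem _ _ h3

/-! ### Linear independence -/

/-- The linear form `v ↦ v c - v 2` on `ℚ³`. -/
def coordP (c : Fin 3) : (Fin 3 → ℚ) →ₗ[ℚ] ℚ where
  toFun v := v c - v 2
  map_add' v w := by simp only [Pi.add_apply]; ring
  map_smul' a v := by simp only [Pi.smul_apply, smul_eq_mul, RingHom.id_apply]; ring

/-- The linear form induced by `coordP c` on `ℚ³/ℚ(1,1,1)`. -/
def coordV (c : Fin 3) : Vq →ₗ[ℚ] ℚ :=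
  Vsub.liftQ (coordP c) (by
    rw [Vsub, Submodule.span_le]
    rintro v rfl
    exact sub_self 1)

/-- The linear form `coordV c` applied to the `t`-th block. -/
def dual (t : Fin 4) (c : Fin 3) : Module.Dual ℚ (Fin 4 → Vq) :=
  (coordV c).comp (LinearMap.proj t)

/-- Contraction of `E(4)` by `dual t c`. -/
def ctr (t : Fin 4) (c : Fin 3) : Em 4 →ₗ[ℚ] Em 4 :=
  CliffordAlgebra.contractLeft (dual t c)

lemma ctr_eGen_mul (t : Fin 4) (c : Fin 3) (j : Fin 4) (p : Fin 3) (x : Em 4) :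
    ctr t c (eGen 4 j p * x) =
      (if t = j then (if p = c then 1 else 0) - (if p = 2 then 1 else 0) else 0 : ℚ) • x -
        eGen 4 j p * ctr t c x := by
  have h : dual t c (Pi.single j (vGen p)) =
      (if t = j then (if p = c then 1 else 0) - (if p = 2 then 1 else 0) else 0 : ℚ) := by
    by_cases htj : t = j
    · subst htj
      rw [dual, LinearMap.comp_apply, LinearMap.proj_apply, Pi.single_eq_same, coordV, vGen]
      change (Pi.single p 1 : Fin 3 → ℚ) c - (Pi.single p 1 : Fin 3 → ℚ) 2 = _
      simp [Pi.single_apply, eq_comm]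
    · simp [dual, htj]
  rw [← h]
  exact CliffordAlgebra.contractLeft_ι_mul _ _ _

lemma ctr_one (t : Fin 4) (c : Fin 3) : ctr t c 1 = 0 :=
  CliffordAlgebra.contractLeft_one _ _

lemma ctr_comm (t s : Fin 4) (c d : Fin 3) (x : Em 4) : ctr t c (ctr s d x) =
    -ctr s d (ctr t c x) := CliffordAlgebra.contractLeft_comm _ _ _

lemma ctr_lprod (t : Fin 4) (c : Fin 3) {l : List (Fin 4 × Fin 3)}
    (ht : ∀ pr ∈ l, pr.1 ≠ t) : ctr t c (lprod 4 l) = 0 := by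
  induction l with
  | nil => exact ctr_one t c
  | cons x l ih =>
    have h1 := ht x (by simp)
    have h2 := ih fun pr hpr => ht pr (by simp [hpr])
    rw [lprod, List.map_cons, List.prod_cons, ctr_eGen_mul, if_neg h1.symm, zero_smul, ← lprod, h2,
      mul_zero, sub_zero]

/-- The augmentation `A → ℚ` sending `x, y, w` to `0`. -/
def augA : Aq →ₐ[ℚ] ℚ :=
  Ideal.Quotient.liftₐ Jid (aeval (fun _ => 0)) (by
    intro p hp
    have hle : Jid ≤ RingHom.ker (aeval (fun _ => (0 : ℚ)) : P3 →ₐ[ℚ] ℚ) := by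
      rw [Jid, Ideal.span_le]
      rintro q hq
      simp only [Set.mem_insert_iff, Set.mem_singleton_iff] at hq
      rcases hq with rfl | rfl | rfl <;> simp [RingHom.mem_ker]
    exact hle hp)

/-- The projection `K(4) → E(4)` induced by the augmentation of `A`. -/
def augK : Kk 4 →ₗ[ℚ] Em 4 :=
  TensorProduct.lift ((LinearMap.lsmul ℚ (Em 4)).comp augA.toLinearMap)

lemma augK_tmul (a : Aq) (u : Em 4) : augK (a ⊗ₜ[ℚ] u) = augA a • u := by
  simp [augK]

lemma augK_inc (u : Em 4) : augK (inc u) = u := by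
  rw [inc_apply, augK_tmul, map_one, one_smul]

/-- The linear form obtained from `K(4) → E(4)` by contracting with both coordinate forms of the
blocks `i`, `j` and with the first coordinate form of the blocks `k`, `l`. On the
bidegree-`(0,6)` part it reads off, up to sign, the coefficient of `θ_i θ_j α_k α_l`. -/
def phi (i j k l : Fin 4) : Kk 4 →ₗ[ℚ] ℚ :=
  ExteriorAlgebra.algebraMapInv.toLinearMap ∘ₗ ctr l 0 ∘ₗ ctr k 0 ∘ₗ ctr j 1 ∘ₗ ctr j 0 ∘ₗ
    ctr i 1 ∘ₗ ctr i 0 ∘ₗ augK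

/-- A form contracting against every block kills `F₃K(4)`: each spanning monomial misses some block,
and contractions anticommute, so the contraction for that block can be performed first. -/
lemma phi_Fsub {i j k l : Fin 4} (hall : ∀ t, t = i ∨ t = j ∨ t = k ∨ t = l) {z : Kk 4}
    (hz : z ∈ Fsub 4 3) : phi i j k l z = 0 := by
  have hle : Fsub 4 3 ≤ LinearMap.ker (phi i j k l) := by
    rw [Fsub, Submodule.span_le]
    rintro _ ⟨a, b, c, I, J, K, hcard, rfl⟩
    obtain ⟨t, ht⟩ : ∃ t, t ∉ I ∪ J ∪ K := by
      by_contra! hc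
      rw [Finset.eq_univ_of_forall hc] at hcard
      simp at hcard
    rw [Finset.notMem_union, Finset.notMem_union] at ht
    have hk : ∀ c, ctr t c (prodGen 4 0 I * prodGen 4 1 J * prodGen 4 2 K) = 0 := by
      intro c
      rw [prodGen_eq_lprod, prodGen_eq_lprod, prodGen_eq_lprod, ← lprod_append, ← lprod_append]
      refine ctr_lprod t c ?_
      rintro ⟨s, p⟩ hs
      simp at hs
      rintro rfl
      tauto
    simp only [SetLike.mem_coe, LinearMap.mem_ker, phi, LinearMap.comp_apply, augK_tmul, map_smul]
    set u := prodGen 4 0 I * prodGen 4 1 J * prodGen 4 2 K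
    have hcomm : ∀ s d x c, ctr t c x = 0 → ctr t c (ctr s d x) = 0 := fun s d x c hx => by
      rw [ctr_comm, hx, map_zero, neg_zero]
    rcases hall t with rfl | rfl | rfl | rfl
    · simp [hk]
    · rw [hcomm i 1 _ 0 (hcomm i 0 _ 0 (hk 0))]; simp
    · rw [hcomm j 1 _ 0 (hcomm j 0 _ 0 (hcomm i 1 _ 0 (hcomm i 0 _ 0 (hk 0))))]; simp
    · rw [hcomm k 0 _ 0 (hcomm j 1 _ 0 (hcomm j 0 _ 0 (hcomm i 1 _ 0 (hcomm i 0 _ 0 (hk 0)))))]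
      simp
  exact hle hz

/-- For each of the six generators, the two blocks `i < j` occurring in degree two followed by the
two blocks `k < l` occurring in degree one. -/
def blk : Fin 6 → Fin 4 × Fin 4 × Fin 4 × Fin 4 :=
  ![(0, 1, 2, 3), (0, 2, 1, 3), (0, 3, 1, 2), (1, 2, 0, 3), (1, 3, 0, 2), (2, 3, 0, 1)]

lemma gens19_eq (b : Fin 6) : gens19 b = (-6 : ℚ) •
    inc (th (blk b).1 * th (blk b).2.1 * zE (blk b).2.2.1 (blk b).2.2.2) := by
  fin_cases b <;> exact zS_sq_mul (by decide) (by decide)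

/-- Up to the factor `-12`, the forms `phi` are dual to the six generators: a block contributing one
generator cannot be contracted twice. -/
lemma phi_gens (a b : Fin 6) :
    phi (blk a).1 (blk a).2.1 (blk a).2.2.1 (blk a).2.2.2 (gens19 b) =
      if a = b then -12 else 0 := by
  have e1 : ∀ t c j p, ctr t c (eGen 4 j p) = (if t = j then (if p = c then 1 else 0) -
      (if p = 2 then 1 else 0) else 0 : ℚ) • 1 := fun t c j p => by
    have := ctr_eGen_mul t c j p 1
    rwa [mul_one, ctr_one, mul_zero, sub_zero] at this
  rw [gens19_eq, map_smul, phi]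
  simp only [LinearMap.comp_apply, augK_inc, th, zE]
  fin_cases a <;> fin_cases b <;>
    simp [blk, mul_add, mul_assoc, ctr_eGen_mul, e1] <;> norm_num

lemma blk_all (a : Fin 6) (t : Fin 4) : t = (blk a).1 ∨ t = (blk a).2.1 ∨
    t = (blk a).2.2.1 ∨ t = (blk a).2.2.2 := by
  revert a t; decide

/-- The images of the six elements `z(1,{1,2})²·z(1,{3,4})`, …,
`z(1,{3,4})²·z(1,{1,2})` in `K(4)/F₃K(4)` are linearly independent over ℚ, and every
element of the bidegree-`(0,6)` component of the invariant subalgebra `K(4)^{D₆}` is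
congruent modulo `F₃K(4)` to a ℚ-linear combination of these six elements. -/
theorem basis_mod_F3_bidegree_0_6 :
    LinearIndependent ℚ
      (fun i => (Submodule.Quotient.mk (gens19 i) : Kk 4 ⧸ Fsub 4 3)) ∧
    ∀ z ∈ component 4 0 6 ⊓ invD6Submodule 4,
      ∃ c : Fin 6 → ℚ, z - ∑ i, c i • gens19 i ∈ Fsub 4 3 := by
  constructor
  · rw [Fintype.linearIndependent_iff]
    intro c hc a
    have h : ∑ i, c i • gens19 i ∈ Fsub 4 3 := by
      rw [← Submodule.Quotient.mk_eq_zero, ← Submodule.mkQ_apply, map_sum]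
      simpa using hc
    have h2 := phi_Fsub (blk_all a) h
    simpa [map_sum, phi_gens] using h2
  · intro z hz
    obtain ⟨f, hf, g, hg, rfl⟩ := Submodule.mem_sup.mp (spanning z hz)
    obtain ⟨c, rfl⟩ := (Submodule.mem_span_range_iff_exists_fun ℚ).mp hg
    exact ⟨c, by simpa using hf⟩

end
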